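/- Let (Ω, P) be a probability space, k ≥ 1 and m ≥ 1 natural numbers, and let (X_{i,j})_{1 ≤ i ≤ k, 1 ≤ j ≤ m} be mutually independent, integrable, everywhere-nonnegative real random variables such that for each fixed j, the variables X_{1,j}, …, X_{k,j} are identically distributed, and each X_{i,j} has an atomless distribution (its law assigns measure 0 to every singleton). Let p be the unique positive real solution to p^k + p − 1 = 0. Then there exists a real number t such that the adversarial value Z of the fully-symmetric threshold mechanism with threshold t — defined by Z(ω) = max over those i for which the set A_i(ω) = {j : X_{i,j}(ω) ≥ t} is nonempty of min_{j ∈ A_i(ω)} X_{i,j}(ω), and Z(ω) = 0 if A_i(ω) is empty for every i — satisfies E[Z] ≥ p · E[max_{i,j} X_{i,j}]. -/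

import Mathlib

open MeasureTheory ProbabilityTheory

lemma aux_vec {Ω : Type*} {mΩ : MeasurableSpace Ω} {P : Measure Ω} [IsProbabilityMeasure P]
    {k m : ℕ} (X : Fin k → Fin m → Ω → ℝ) (mX : ∀ i j, Measurable (X i j))
    (h : iIndepFun (fun q : Fin k × Fin m => X q.1 q.2) P) :
    iIndepFun (fun i ω => (fun j => X i j ω)) P := by
  have h' : iIndepFun (fun (p : (_ : Fin k) × Fin m) ω ↦ X p.1 p.2 ω) P :=
    h.precomp (g := Equiv.sigmaEquivProd (Fin k) (Fin m)) (Equiv.injective _)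
  have h2 : ∀ i, iIndepFun (X i) P := fun i =>
    h.precomp (g := fun j => (i, j)) (fun a b hab => by simpa using hab)
  have : ∀ i j, IsProbabilityMeasure (P.map (X i j)) :=
    fun i j ↦ Measure.isProbabilityMeasure_map (mX i j).aemeasurable
  have : ∀ i, IsProbabilityMeasure (P.map (fun ω ↦ (X i · ω))) :=
    fun i ↦ Measure.isProbabilityMeasure_map (Measurable.aemeasurable (by fun_prop))
  have e : (MeasurableEquiv.piCurry (fun (_ : Fin k) (_ : Fin m) => ℝ)) ∘
      (fun ω p ↦ X p.1 p.2 ω) = fun ω i j ↦ X i j ω := by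
    ext; simp [Sigma.curry]
  rw [iIndepFun_iff_map_fun_eq_infinitePi_map (by fun_prop), ← e,
    ← Measure.map_map (by fun_prop) (by fun_prop),
    (iIndepFun_iff_map_fun_eq_infinitePi_map (by fun_prop)).1 h',
    Measure.infinitePi_map_piCurry (fun i j ↦ P.map (X i j))]
  congrm Measure.infinitePi fun i ↦ ?_
  rw [(iIndepFun_iff_map_fun_eq_infinitePi_map (by fun_prop)).1 (h2 i)]

lemma aux_real {Ω ι : Type*} [Fintype ι] {β : ι → Type*} [∀ i, MeasurableSpace (β i)]
    {mΩ : MeasurableSpace Ω} {P : Measure Ω}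
    {f : ∀ i, Ω → β i} (h : iIndepFun f P) (s : ∀ i, Set (β i)) (hs : ∀ i, MeasurableSet (s i)) :
    P.real {ω | ∀ i, f i ω ∈ s i} = ∏ i, P.real {ω | f i ω ∈ s i} := by
  have := h.meas_iInter (s := fun i => f i ⁻¹' s i) (fun i => ⟨s i, hs i, rfl⟩)
  simp only [measureReal_def, ← ENNReal.toReal_prod]
  congr 1
  rw [← Set.iInter_ofPred]
  exact this

lemma aux_conv (k : ℕ) (p a : ℝ) (hp : 0 ≤ p) (hp1 : p ≤ 1) (ha1 : a ≤ 1) :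
    (1 - p * a) ^ k ≤ p * (1 - a) ^ k + (1 - p) := by
  have := (convexOn_pow (𝕜 := ℝ) k).2 (x := 1 - a) (y := 1) (by simpa using ha1)
    (by simp) hp (sub_nonneg.2 hp1) (by ring)
  simp only [smul_eq_mul, one_pow, mul_one] at this
  rw [show 1 - p * a = p * (1 - a) + (1 - p) by ring]
  exact this

lemma aux_thr {Ω : Type*} {mΩ : MeasurableSpace Ω} {P : Measure Ω} [IsProbabilityMeasure P]
    {m : ℕ} (hm : 1 ≤ m) (Y : Fin m → Ω → ℝ) (hY : ∀ j, Measurable (Y j))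
    (hat : ∀ j x, P {ω | Y j ω = x} = 0) (p : ℝ) (hp : 0 < p) (hp1 : p < 1) :
    ∃ t : ℝ, ∏ j, P.real {ω | Y j ω < t} = p := by
  have : ∀ j, IsProbabilityMeasure (P.map (Y j)) :=
    fun j ↦ Measure.isProbabilityMeasure_map (hY j).aemeasurable
  have hc : ∀ j, Continuous (cdf (P.map (Y j))) := by
    intro j
    rw [continuous_iff_continuousAt]
    intro x
    rw [(monotone_cdf _).continuousAt_iff_leftLim_eq_rightLim]
    rw [StieltjesFunction.rightLim_eq]
    have h1 := (cdf (P.map (Y j))).measure_singleton x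
    rw [measure_cdf, Measure.map_apply (hY j) (measurableSet_singleton x)] at h1
    have h2 : P (Y j ⁻¹' {x}) = 0 := hat j x
    rw [h2, eq_comm, ENNReal.ofReal_eq_zero] at h1
    have := (monotone_cdf (P.map (Y j))).leftLim_le (le_refl x)
    linarith
  have heq : ∀ j x, P.real {ω | Y j ω < x} = cdf (P.map (Y j)) x := by
    intro j x
    rw [cdf_eq_real, map_measureReal_apply (hY j) measurableSet_Iic]
    apply measureReal_congr
    have : ∀ᵐ ω ∂P, Y j ω ≠ x := by
      rw [ae_iff]; simpa using hat j x
    filter_upwards [this] with ω hω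
    apply propext
    exact (lt_iff_le_and_ne.trans (and_iff_left hω))
  simp only [heq]
  have hcc : Continuous (fun t => ∏ j, cdf (P.map (Y j)) t) :=
    continuous_finsetProd _ (fun j _ => hc j)
  have hT : Filter.Tendsto (fun t => ∏ j, cdf (P.map (Y j)) t) Filter.atTop (nhds 1) := by
    simpa using tendsto_finsetProd Finset.univ (fun j _ => tendsto_cdf_atTop (P.map (Y j)))
  have hB : Filter.Tendsto (fun t => ∏ j, cdf (P.map (Y j)) t) Filter.atBot (nhds 0) := by
    have := tendsto_finsetProd Finset.univ (fun j _ => tendsto_cdf_atBot (P.map (Y j)))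
    simpa [Finset.prod_const, show m ≠ 0 by omega] using this
  exact mem_range_of_exists_le_of_exists_ge hcc
    ((hB.eventually (gt_mem_nhds hp)).exists.imp fun _ h => h.le)
    ((hT.eventually (lt_mem_nhds hp1)).exists.imp fun _ h => h.le)

/-- Characterization of the mechanism value. -/
lemma aux_Z {k m : ℕ} (x : Fin k → Fin m → ℝ) (hx : ∀ i j, 0 ≤ x i j) (t u : ℝ) (hu : 0 ≤ u) :
    u < sSup {v | ∃ i : Fin k, (∃ j, t ≤ x i j) ∧ v = sInf {y | ∃ j, t ≤ x i j ∧ y = x i j}} ↔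
      ∃ i, (∃ j, t ≤ x i j) ∧ ∀ j, t ≤ x i j → u < x i j := by
  have hfin : {v | ∃ i : Fin k, (∃ j, t ≤ x i j) ∧
      v = sInf {y | ∃ j, t ≤ x i j ∧ y = x i j}}.Finite := by
    refine (Set.finite_range (fun i => sInf {y | ∃ j, t ≤ x i j ∧ y = x i j})).subset ?_
    rintro v ⟨i, -, rfl⟩
    exact ⟨i, rfl⟩
  have hfin2 : ∀ i, {y | ∃ j, t ≤ x i j ∧ y = x i j}.Finite := by
    intro i
    refine (Set.finite_range (fun j => x i j)).subset ?_
    rintro v ⟨j, -, rfl⟩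
    exact ⟨j, rfl⟩
  have key : ∀ i, (∃ j, t ≤ x i j) → (u < sInf {y | ∃ j, t ≤ x i j ∧ y = x i j} ↔
      ∀ j, t ≤ x i j → u < x i j) := by
    rintro i ⟨j, hj⟩
    rw [Set.Finite.lt_csInf_iff (hfin2 i) ⟨_, j, hj, rfl⟩]
    constructor
    · intro h j hj
      exact h _ ⟨j, hj, rfl⟩
    · rintro h _ ⟨j, hj, rfl⟩
      exact h j hj
  rcases Set.eq_empty_or_nonempty {v | ∃ i : Fin k, (∃ j, t ≤ x i j) ∧
      v = sInf {y | ∃ j, t ≤ x i j ∧ y = x i j}} with he | hne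
  · rw [he, Real.sSup_empty]
    constructor
    · intro h; linarith
    · rintro ⟨i, hi, -⟩
      have : sInf {y | ∃ j, t ≤ x i j ∧ y = x i j} ∈ (∅ : Set ℝ) := he ▸ ⟨i, hi, rfl⟩
      exact this.elim
  · rw [lt_csSup_iff hfin.bddAbove hne]
    constructor
    · rintro ⟨_, ⟨i, hi, rfl⟩, h⟩
      exact ⟨i, hi, (key i hi).1 h⟩
    · rintro ⟨i, hi, h⟩
      exact ⟨_, ⟨i, hi, rfl⟩, (key i hi).2 h⟩

lemma aux_M {k m : ℕ} (hk : 1 ≤ k) (hm : 1 ≤ m) (x : Fin k → Fin m → ℝ) (u : ℝ) :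
    u < sSup {y | ∃ i j, y = x i j} ↔ ∃ i j, u < x i j := by
  have hfin : {y | ∃ i j, y = x i j}.Finite := by
    refine (Set.finite_range (fun q : Fin k × Fin m => x q.1 q.2)).subset ?_
    rintro v ⟨i, j, rfl⟩
    exact ⟨(i, j), rfl⟩
  rw [lt_csSup_iff hfin.bddAbove ⟨_, ⟨0, hk⟩, ⟨0, hm⟩, rfl⟩]
  constructor
  · rintro ⟨_, ⟨i, j, rfl⟩, h⟩; exact ⟨i, j, h⟩
  · rintro ⟨i, j, h⟩; exact ⟨_, ⟨i, j, rfl⟩, h⟩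

/-- One agent: the probability that exactly one element exceeds `u`, all others being below `t`. -/
lemma aux_agent {Ω : Type*} {mΩ : MeasurableSpace Ω} {P : Measure Ω} [IsProbabilityMeasure P]
    {m : ℕ} (Y : Fin m → Ω → ℝ) (hY : ∀ j, Measurable (Y j)) (hind : iIndepFun Y P)
    (t u p : ℝ) (htu : t ≤ u) (ht : ∏ j, P.real {ω | Y j ω < t} = p) :
    p * P.real {ω | ∃ j, u < Y j ω} ≤
      P.real {ω | ∃ j, u < Y j ω ∧ ∀ l, l ≠ j → Y l ω < t} := by
  have hp : 0 ≤ p := ht ▸ Finset.prod_nonneg (fun _ _ => measureReal_nonneg)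
  have hE : ∀ j, {ω | u < Y j ω ∧ ∀ l, l ≠ j → Y l ω < t} =
      {ω | ∀ l, Y l ω ∈ (if l = j then Set.Ioi u else Set.Iio t)} := by
    intro j
    ext ω
    simp only [Set.mem_ofPred_eq]
    constructor
    · rintro ⟨h1, h2⟩ l
      by_cases hl : l = j
      · subst hl; simpa using h1
      · simpa [hl] using h2 l hl
    · intro h
      refine ⟨by simpa using h j, fun l hl => by simpa [hl] using h l⟩
  have hms : ∀ j l : Fin m, MeasurableSet (if l = j then Set.Ioi u else Set.Iio t) := by
    intro j l; split_ifs
    · exact measurableSet_Ioi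
    · exact measurableSet_Iio
  have hEm : ∀ j, MeasurableSet {ω | u < Y j ω ∧ ∀ l, l ≠ j → Y l ω < t} := by
    intro j
    rw [hE j, Set.ofPred_forall]
    exact MeasurableSet.iInter fun l => hY l (hms j l)
  have hEj : ∀ j, p * P.real {ω | u < Y j ω} ≤
      P.real {ω | u < Y j ω ∧ ∀ l, l ≠ j → Y l ω < t} := by
    intro j
    rw [hE j, aux_real hind _ (hms j), ← Finset.mul_prod_erase _ _ (Finset.mem_univ j)]
    have h1 : ∏ l ∈ Finset.univ.erase j,
        P.real {ω | Y l ω ∈ (if l = j then Set.Ioi u else Set.Iio t)} =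
        ∏ l ∈ Finset.univ.erase j, P.real {ω | Y l ω < t} := by
      refine Finset.prod_congr rfl fun l hl => ?_
      rw [if_neg (Finset.ne_of_mem_erase hl)]
      rfl
    have h2 : P.real {ω | Y j ω ∈ (if j = j then Set.Ioi u else Set.Iio t)} =
        P.real {ω | u < Y j ω} := by
      rw [if_pos rfl]; rfl
    rw [h1, h2, ← ht, ← Finset.mul_prod_erase _ _ (Finset.mem_univ j), mul_comm]
    refine mul_le_mul_of_nonneg_left ?_ measureReal_nonneg
    refine mul_le_of_le_one_left (Finset.prod_nonneg (fun _ _ => measureReal_nonneg)) ?_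
    exact measureReal_le_one
  calc p * P.real {ω | ∃ j, u < Y j ω}
      ≤ p * ∑ j, P.real {ω | u < Y j ω} := by
        refine mul_le_mul_of_nonneg_left ?_ hp
        rw [Set.ofPred_exists]
        exact measureReal_iUnion_fintype_le _
    _ = ∑ j, p * P.real {ω | u < Y j ω} := Finset.mul_sum _ _ _
    _ ≤ ∑ j, P.real {ω | u < Y j ω ∧ ∀ l, l ≠ j → Y l ω < t} :=
        Finset.sum_le_sum fun j _ => hEj j
    _ = _ := by
        rw [Set.ofPred_exists, measureReal_iUnion_fintype ?_ hEm]
        intro i j hij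
        rw [Function.onFun, Set.disjoint_left]
        rintro ω ⟨h1, h2⟩ ⟨h3, h4⟩
        have := h2 j hij.symm
        linarith

/-- Probability that some agent is in `s` versus the complement product. -/
lemma aux_some {Ω : Type*} {mΩ : MeasurableSpace Ω} {P : Measure Ω} [IsProbabilityMeasure P]
    {k m : ℕ} (X : Fin k → Fin m → Ω → ℝ) (mX : ∀ i j, Measurable (X i j))
    (h : iIndepFun (fun q : Fin k × Fin m => X q.1 q.2) P)
    (s : Set (Fin m → ℝ)) (hs : MeasurableSet s) :
    P.real {ω | ∃ i, (fun j => X i j ω) ∈ s} =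
      1 - ∏ i, (1 - P.real {ω | (fun j => X i j ω) ∈ s}) := by
  have hm1 : ∀ i, MeasurableSet {ω | (fun j => X i j ω) ∈ s} := fun i =>
    (measurable_pi_iff.2 (mX i)) hs
  have h1 := aux_real (aux_vec X mX h) (fun _ => sᶜ) (fun _ => hs.compl)
  have h2 : ∀ i, P.real {ω | (fun j => X i j ω) ∈ sᶜ} =
      1 - P.real {ω | (fun j => X i j ω) ∈ s} := fun i => probReal_compl_eq_one_sub (hm1 i)
  simp only [h2] at h1
  rw [← h1]
  have h3 : {ω | ∀ i, (fun j => X i j ω) ∈ sᶜ} = {ω | ∃ i, (fun j => X i j ω) ∈ s}ᶜ := by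
    ext ω; simp
  rw [h3, probReal_compl_eq_one_sub]
  · ring
  · rw [Set.ofPred_exists]; exact MeasurableSet.iUnion hm1

/-- Atomless adversarial lower bound for agent-symmetric instances: there is a threshold `t`
such that the fully-symmetric threshold mechanism with threshold `t`, against adversarial
agents, achieves a `p`-fraction of the principal's non-delegated optimum, where `p` is the
unique positive root of `p ^ k + p - 1 = 0`. The mechanism's adversarial value is the largest,
over agents `i` holding at least one element of value `≥ t`, of the least such value held by
agent `i` (recall that in Mathlib `sSup ∅ = 0` for real numbers). -/
theorem atomless_adversarial_lower_bound
    {Ω : Type*} [MeasureSpace Ω] [IsProbabilityMeasure (ℙ : Measure Ω)]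
    (k m : ℕ) (hk : 1 ≤ k) (hm : 1 ≤ m)
    (X : Fin k → Fin m → Ω → ℝ)
    (hmeas : ∀ i j, Measurable (X i j))
    (hindep : iIndepFun
      (fun q : Fin k × Fin m => X q.1 q.2) ℙ)
    (hint : ∀ i j, Integrable (X i j) ℙ)
    (hnonneg : ∀ i j ω, 0 ≤ X i j ω)
    (hident : ∀ (i i' : Fin k) (j : Fin m), IdentDistrib (X i j) (X i' j) ℙ ℙ)
    (hatomless : ∀ (i : Fin k) (j : Fin m) (x : ℝ), ℙ {ω | X i j ω = x} = 0)
    (p : ℝ) (hp : 0 < p) (hroot : p ^ k + p = 1) :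
    ∃ t : ℝ,
      p * ∫ ω, sSup {x | ∃ i j, x = X i j ω} ∂ℙ ≤
        ∫ ω, sSup {v | ∃ i : Fin k, (∃ j, t ≤ X i j ω) ∧
          v = sInf {x | ∃ j, t ≤ X i j ω ∧ x = X i j ω}} ∂ℙ := by
  have hp1 : p < 1 := by have := pow_pos hp k; linarith
  let i0 : Fin k := ⟨0, hk⟩
  obtain ⟨t, ht0⟩ := aux_thr hm (X i0) (hmeas i0) (hatomless i0) p hp hp1
  refine ⟨t, ?_⟩
  have hind2 : ∀ i, iIndepFun (X i) ℙ := fun i =>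
    hindep.precomp (g := fun j => (i, j)) (fun a b hab => by simpa using hab)
  have hid : ∀ i i' j (s : Set ℝ), MeasurableSet s →
      (ℙ : Measure Ω).real {ω | X i j ω ∈ s} = (ℙ : Measure Ω).real {ω | X i' j ω ∈ s} := by
    intro i i' j s hs
    simp only [measureReal_def]
    congr 1
    exact (hident i i' j).measure_mem_eq hs
  have ht : ∀ i, ∏ j, (ℙ : Measure Ω).real {ω | X i j ω < t} = p := by
    intro i
    rw [← ht0]
    exact Finset.prod_congr rfl fun j _ => hid i i0 j (Set.Iio t) measurableSet_Iio
  -- the tail comparison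
  have tail : ∀ u : ℝ, 0 < u →
      p * (ℙ : Measure Ω).real {ω | u < sSup {x | ∃ i j, x = X i j ω}} ≤
      (ℙ : Measure Ω).real {ω | u < sSup {v | ∃ i : Fin k, (∃ j, t ≤ X i j ω) ∧
          v = sInf {x | ∃ j, t ≤ X i j ω ∧ x = X i j ω}}} := by
    intro u hu
    have e1 : {ω | u < sSup {x | ∃ i j, x = X i j ω}} = {ω | ∃ i j, u < X i j ω} := by
      ext ω; exact aux_M hk hm (fun i j => X i j ω) u
    have e2 : {ω | u < sSup {v | ∃ i : Fin k, (∃ j, t ≤ X i j ω) ∧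
          v = sInf {x | ∃ j, t ≤ X i j ω ∧ x = X i j ω}}} =
        {ω | ∃ i, (∃ j, t ≤ X i j ω) ∧ ∀ j, t ≤ X i j ω → u < X i j ω} := by
      ext ω
      exact aux_Z (fun i j => X i j ω) (fun i j => hnonneg i j ω) t u hu.le
    rw [e1, e2]
    rcases lt_or_ge u t with hut | htu
    · -- below the threshold
      have h1 := aux_some X hmeas hindep {x | ∃ j, t ≤ x j} (by
        rw [Set.ofPred_exists]
        exact MeasurableSet.iUnion fun j => measurableSet_le measurable_const (measurable_pi_apply j))
      have h2 : ∀ i, (1 - (ℙ : Measure Ω).real {ω | (fun j => X i j ω) ∈ {x | ∃ j, t ≤ x j}})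
          = p := by
        intro i
        rw [← probReal_compl_eq_one_sub, ← ht i]
        · refine Eq.trans ?_
            (aux_real (hind2 i) (fun _ => Set.Iio t) (fun _ => measurableSet_Iio))
          congr 1
          ext ω; simp
        · change MeasurableSet {ω | ∃ j, t ≤ X i j ω}
          rw [Set.ofPred_exists]
          exact MeasurableSet.iUnion fun j => measurableSet_le measurable_const (hmeas i j)
      simp only [h2, Finset.prod_const, Finset.card_univ, Fintype.card_fin] at h1
      calc p * (ℙ : Measure Ω).real {ω | ∃ i j, u < X i j ω} ≤ p * 1 :=
            mul_le_mul_of_nonneg_left measureReal_le_one hp.le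
        _ = (ℙ : Measure Ω).real {ω | ∃ i, (fun j => X i j ω) ∈ {x | ∃ j, t ≤ x j}} := by
            rw [h1]; linarith
        _ ≤ _ := by
            refine measureReal_mono ?_
            rintro ω ⟨i, j, hj⟩
            exact ⟨i, ⟨j, hj⟩, fun l hl => hut.trans_le hl⟩
    · -- above the threshold
      have hsm : MeasurableSet {x : Fin m → ℝ | ∃ j, u < x j} := by
        rw [Set.ofPred_exists]
        exact MeasurableSet.iUnion fun j => measurableSet_lt measurable_const (measurable_pi_apply j)
      have hsm2 : MeasurableSet {x : Fin m → ℝ | ∃ j, u < x j ∧ ∀ l, l ≠ j → x l < t} := by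
        rw [Set.ofPred_exists]
        refine MeasurableSet.iUnion fun j => ?_
        refine (measurableSet_lt measurable_const (measurable_pi_apply j)).inter ?_
        change MeasurableSet {x : Fin m → ℝ | ∀ l, l ≠ j → x l < t}
        simp only [Set.ofPred_forall]
        exact MeasurableSet.iInter fun l => MeasurableSet.iInter fun _ =>
          measurableSet_lt (measurable_pi_apply l) measurable_const
      have h1 := aux_some X hmeas hindep _ hsm
      have h2 := aux_some X hmeas hindep _ hsm2
      set a : ℝ := (ℙ : Measure Ω).real {ω | ∃ j, u < X i0 j ω} with ha
      have hai : ∀ i, 1 - (ℙ : Measure Ω).real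
          {ω | (fun j => X i j ω) ∈ {x : Fin m → ℝ | ∃ j, u < x j}} = 1 - a := by
        have : ∀ i, 1 - (ℙ : Measure Ω).real {ω | ∃ j, u < X i j ω} =
            ∏ j, (ℙ : Measure Ω).real {ω | X i j ω ∈ Set.Iic u} := by
          intro i
          rw [← probReal_compl_eq_one_sub]
          · rw [← aux_real (hind2 i) (fun _ => Set.Iic u) (fun _ => measurableSet_Iic)]
            congr 1
            ext ω; simp
          · rw [Set.ofPred_exists]
            exact MeasurableSet.iUnion fun j => measurableSet_lt measurable_const (hmeas i j)
        intro i
        rw [ha, this i0]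
        refine (this i).trans ?_
        exact Finset.prod_congr rfl fun j _ => hid i i0 j _ measurableSet_Iic
      simp only [hai, Finset.prod_const, Finset.card_univ, Fintype.card_fin] at h1
      have h3 : ∏ i, (1 - (ℙ : Measure Ω).real {ω | (fun j => X i j ω) ∈
          {x : Fin m → ℝ | ∃ j, u < x j ∧ ∀ l, l ≠ j → x l < t}}) ≤ (1 - p * a) ^ k := by
        have := Finset.prod_le_prod (s := Finset.univ) (f := fun i : Fin k =>
          (1 - (ℙ : Measure Ω).real {ω | (fun j => X i j ω) ∈
          {x : Fin m → ℝ | ∃ j, u < x j ∧ ∀ l, l ≠ j → x l < t}})) (g := fun _ => 1 - p * a)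
          (fun i _ => sub_nonneg.2 measureReal_le_one) (fun i _ => by
            have h4 := aux_agent (X i) (hmeas i) (hind2 i) t u p htu (ht i)
            have h5 : (ℙ : Measure Ω).real {ω | ∃ j, u < X i j ω} = a := by
              have := hai i
              simp only [Set.mem_ofPred_eq] at this
              linarith
            rw [h5] at h4
            exact sub_le_sub_left h4 1)
        simpa using this
      have h4 := aux_conv k p a hp.le hp1.le measureReal_le_one
      calc p * (ℙ : Measure Ω).real {ω | ∃ i j, u < X i j ω} = p * (1 - (1 - a) ^ k) := by
            rw [← h1]; rfl
        _ ≤ 1 - (1 - p * a) ^ k := by linarith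
        _ ≤ (ℙ : Measure Ω).real {ω | ∃ i, (fun j => X i j ω) ∈
              {x : Fin m → ℝ | ∃ j, u < x j ∧ ∀ l, l ≠ j → x l < t}} := by
            rw [h2]; linarith
        _ ≤ _ := by
            refine measureReal_mono ?_
            rintro ω ⟨i, j, hj, hl⟩
            refine ⟨i, ⟨j, htu.trans hj.le⟩, fun l hl' => ?_⟩
            by_cases hlj : l = j
            · rw [hlj]; exact hj
            · exact absurd (hl l hlj) (not_lt.2 hl')
  -- integrability
  have nnM : ∀ ω, 0 ≤ sSup {x | ∃ i j, x = X i j ω} := fun ω =>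
    Real.sSup_nonneg (by rintro _ ⟨i, j, rfl⟩; exact hnonneg i j ω)
  have nnZ : ∀ ω, 0 ≤ sSup {v | ∃ i : Fin k, (∃ j, t ≤ X i j ω) ∧
          v = sInf {x | ∃ j, t ≤ X i j ω ∧ x = X i j ω}} := fun ω =>
    Real.sSup_nonneg (by
      rintro _ ⟨i, -, rfl⟩
      exact Real.sInf_nonneg (by rintro _ ⟨j, -, rfl⟩; exact hnonneg i j ω))
  have leZ : ∀ ω, sSup {v | ∃ i : Fin k, (∃ j, t ≤ X i j ω) ∧
          v = sInf {x | ∃ j, t ≤ X i j ω ∧ x = X i j ω}} ≤ sSup {x | ∃ i j, x = X i j ω} := by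
    intro ω
    refine le_of_forall_lt fun u hu => ?_
    rcases lt_or_ge u 0 with h0 | h0
    · exact h0.trans_le (nnM ω)
    · obtain ⟨i, ⟨j, hj⟩, h⟩ :=
        (aux_Z (fun i j => X i j ω) (fun i j => hnonneg i j ω) t u h0).1 hu
      exact (aux_M hk hm (fun i j => X i j ω) u).2 ⟨i, j, h j hj⟩
  have leM : ∀ ω, sSup {x | ∃ i j, x = X i j ω} ≤ ∑ i, ∑ j, X i j ω := by
    intro ω
    refine csSup_le ⟨_, i0, ⟨0, hm⟩, rfl⟩ ?_
    rintro _ ⟨i, j, rfl⟩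
    exact (Finset.single_le_sum (f := fun j => X i j ω) (fun j _ => hnonneg i j ω)
      (Finset.mem_univ j)).trans
      (Finset.single_le_sum (f := fun i => ∑ j, X i j ω)
        (fun i _ => Finset.sum_nonneg fun j _ => hnonneg i j ω) (Finset.mem_univ i))
  have msM : Measurable (fun ω => sSup {x | ∃ i j, x = X i j ω}) := by
    refine measurable_of_Ioi fun u => ?_
    have : (fun ω => sSup {x | ∃ i j, x = X i j ω}) ⁻¹' Set.Ioi u = ⋃ i, ⋃ j, {ω | u < X i j ω} := by
      ext ω
      simp only [Set.mem_iUnion]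
      exact aux_M hk hm (fun i j => X i j ω) u
    rw [this]
    exact MeasurableSet.iUnion fun i => MeasurableSet.iUnion fun j =>
      measurableSet_lt measurable_const (hmeas i j)
  have msZ : Measurable (fun ω => sSup {v | ∃ i : Fin k, (∃ j, t ≤ X i j ω) ∧
          v = sInf {x | ∃ j, t ≤ X i j ω ∧ x = X i j ω}}) := by
    refine measurable_of_Ioi fun u => ?_
    rcases lt_or_ge u 0 with h0 | h0
    · convert MeasurableSet.univ
      ext ω
      simpa using h0.trans_le (nnZ ω)
    · have : (fun ω => sSup {v | ∃ i : Fin k, (∃ j, t ≤ X i j ω) ∧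
          v = sInf {x | ∃ j, t ≤ X i j ω ∧ x = X i j ω}}) ⁻¹' Set.Ioi u =
          ⋃ i, (⋃ j, {ω | t ≤ X i j ω}) ∩ ⋂ j, ({ω | t ≤ X i j ω}ᶜ ∪ {ω | u < X i j ω}) := by
        ext ω
        refine (aux_Z (fun i j => X i j ω) (fun i j => hnonneg i j ω) t u h0).trans ?_
        simp only [Set.mem_iUnion, Set.mem_inter_iff, Set.mem_iInter, Set.mem_union,
          Set.mem_compl_iff, Set.mem_ofPred_eq, imp_iff_not_or]
      rw [this]
      have h1 : ∀ i j, MeasurableSet {ω | t ≤ X i j ω} := fun i j =>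
        measurableSet_le measurable_const (hmeas i j)
      have h2 : ∀ i j, MeasurableSet {ω | u < X i j ω} := fun i j =>
        measurableSet_lt measurable_const (hmeas i j)
      exact MeasurableSet.iUnion fun i => (MeasurableSet.iUnion (h1 i)).inter
        (MeasurableSet.iInter fun j => (h1 i j).compl.union (h2 i j))
  have inM : Integrable (fun ω => sSup {x | ∃ i j, x = X i j ω}) ℙ := by
    refine Integrable.mono' (g := fun ω => ∑ i, ∑ j, X i j ω)
      (integrable_finsetSum _ fun i _ => integrable_finsetSum _ fun j _ => hint i j)
      msM.aestronglyMeasurable (Filter.Eventually.of_forall fun ω => ?_)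
    rw [Real.norm_of_nonneg (nnM ω)]
    exact leM ω
  have inZ : Integrable (fun ω => sSup {v | ∃ i : Fin k, (∃ j, t ≤ X i j ω) ∧
          v = sInf {x | ∃ j, t ≤ X i j ω ∧ x = X i j ω}}) ℙ := by
    refine Integrable.mono' inM
      msZ.aestronglyMeasurable (Filter.Eventually.of_forall fun ω => ?_)
    rw [Real.norm_of_nonneg (nnZ ω)]
    exact leZ ω
  -- layer cake, in `ENNReal`
  rw [← integral_const_mul, integral_eq_lintegral_of_nonneg_ae
      (Filter.Eventually.of_forall fun ω => mul_nonneg hp.le (nnM ω))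
      (msM.const_mul p).aestronglyMeasurable,
    integral_eq_lintegral_of_nonneg_ae (Filter.Eventually.of_forall nnZ)
      msZ.aestronglyMeasurable]
  refine ENNReal.toReal_mono inZ.lintegral_lt_top.ne ?_
  simp only [ENNReal.ofReal_mul hp.le]
  rw [lintegral_const_mul _ msM.ennreal_ofReal,
    lintegral_eq_lintegral_meas_lt _ (Filter.Eventually.of_forall nnM) msM.aemeasurable,
    lintegral_eq_lintegral_meas_lt _ (Filter.Eventually.of_forall nnZ) msZ.aemeasurable,
    ← lintegral_const_mul' _ _ ENNReal.ofReal_ne_top]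
  refine setLIntegral_mono' measurableSet_Ioi fun u hu => ?_
  have := ENNReal.ofReal_le_ofReal (tail u hu)
  rw [ENNReal.ofReal_mul hp.le] at this
  rw [ofReal_measureReal, ofReal_measureReal] at this
  exact this
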